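/- Vanishing of h (Appendix D): Let τ lie in the complex upper half-plane, write σ = τ/2, and let x, y, z ∈ ℂ be such that all theta-function values appearing in denominators below are nonzero. Then S'''(x−y,τ)·[ζ₁(z−x,σ) − ζ₁(z−y,σ) + ζ₂(x−y,σ)] − 2 S''(x−y,τ)·℘₂(x−y,σ) − S'(x−y,τ)·℘₂'(x−y,σ) + 2 S''(x−y,τ)·℘₁(y−z,σ) + S''(x−y,τ)·(S''(y,τ)/S'(y,τ))·[−ζ₁(z,σ) + ζ₁(z−y,σ) + ζ₂(y,σ)] − S''(x−y,τ)·(S''(x,τ)/S'(x,τ))·[−ζ₁(z,σ) + ζ₁(z−x,σ) + ζ₂(x,σ)] + S''(x−y,τ)·[℘₂(x,σ) − ℘₂(y,σ)] − (S'(z,τ)/S'(x,τ))·S''(z−x,τ)·S''(x−y,τ) + (S'(z,τ)/S'(y,τ))·S''(z−y,τ)·S''(x−y,τ) + S''(z−x,τ)·S''(z−y,τ) = 0. (With x = ξ_i, y = ξ_j, z = ξ_k, this identity proves ∂_{λ_k}Γ_{ij} = Γ_{ij}Γ_{jk} + Γ_{ik}Γ_{kj} − Γ_{ik}Γ_{ij}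 under the elliptic Gibbons–Tsarev system.) -/

import Mathlib

open Complex

/-- Jacobi theta function θ₁(u,τ). -/
noncomputable def theta1 (u τ : ℂ) : ℂ :=
  -∑' k : ℤ, Complex.exp ((Real.pi : ℂ) * Complex.I * τ * ((k : ℂ) + 1/2)^2
      + 2 * (Real.pi : ℂ) * Complex.I * (u + 1/2) * ((k : ℂ) + 1/2))

/-- Jacobi theta function θ₂(u,τ). -/
noncomputable def theta2 (u τ : ℂ) : ℂ :=
  ∑' k : ℤ, Complex.exp ((Real.pi : ℂ) * Complex.I * τ * ((k : ℂ) + 1/2)^2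
      + 2 * (Real.pi : ℂ) * Complex.I * u * ((k : ℂ) + 1/2))

/-- Jacobi theta function θ₃(u,τ). -/
noncomputable def theta3 (u τ : ℂ) : ℂ :=
  ∑' k : ℤ, Complex.exp ((Real.pi : ℂ) * Complex.I * τ * (k : ℂ)^2
      + 2 * (Real.pi : ℂ) * Complex.I * u * (k : ℂ))

/-- Jacobi theta function θ₄(u,τ). -/
noncomputable def theta4 (u τ : ℂ) : ℂ :=
  ∑' k : ℤ, Complex.exp ((Real.pi : ℂ) * Complex.I * τ * (k : ℂ)^2
      + 2 * (Real.pi : ℂ) * Complex.I * (u + 1/2) * (k : ℂ))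

/-- ζ_a(u,τ) = θ_a'(u,τ)/θ_a(u,τ). -/
noncomputable def zeta1 (u τ : ℂ) : ℂ := deriv (fun v => theta1 v τ) u / theta1 u τ
noncomputable def zeta2 (u τ : ℂ) : ℂ := deriv (fun v => theta2 v τ) u / theta2 u τ
noncomputable def zeta3 (u τ : ℂ) : ℂ := deriv (fun v => theta3 v τ) u / theta3 u τ
noncomputable def zeta4 (u τ : ℂ) : ℂ := deriv (fun v => theta4 v τ) u / theta4 u τ

/-- ℘_a(u,τ) = −∂_u ζ_a(u,τ). -/
noncomputable def wp1 (u τ : ℂ) : ℂ := -deriv (fun v => zeta1 v τ) u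
noncomputable def wp2 (u τ : ℂ) : ℂ := -deriv (fun v => zeta2 v τ) u
noncomputable def wp1' (u τ : ℂ) : ℂ := deriv (fun v => wp1 v τ) u
noncomputable def wp2' (u τ : ℂ) : ℂ := deriv (fun v => wp2 v τ) u

/-- S'(u,τ) = ζ₁(u,τ) − ζ₄(u,τ). -/
noncomputable def Sp (u τ : ℂ) : ℂ := zeta1 u τ - zeta4 u τ
/-- S''(u,τ) = ∂_u S'(u,τ). -/
noncomputable def Spp (u τ : ℂ) : ℂ := deriv (fun v => Sp v τ) u
/-- S'''(u,τ) = ∂_u S''(u,τ). -/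
noncomputable def Sppp (u τ : ℂ) : ℂ := deriv (fun v => Spp v τ) u

/-- Partial derivative in the j-th coordinate of a ℂ-valued function on ℝ^N. -/
noncomputable def pdC {N : ℕ} (j : Fin N) (f : (Fin N → ℝ) → ℂ) (x : Fin N → ℝ) : ℂ :=
  fderiv ℝ f x (Pi.single j 1)

/-- Partial derivative in the j-th coordinate of an ℝ-valued function on ℝ^d. -/
noncomputable def pd {d : ℕ} (j : Fin d) (f : (Fin d → ℝ) → ℝ) (x : Fin d → ℝ) : ℝ :=
  fderiv ℝ f x (Pi.single j 1)

/-! ## Series identities -/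

lemma aux_theta2_eq (u τ : ℂ) : theta2 u τ =
    Complex.exp ((Real.pi : ℂ) * I * τ / 4 + (Real.pi : ℂ) * I * u) * jacobiTheta₂ (u + τ / 2) τ := by
  unfold theta2 jacobiTheta₂
  rw [← tsum_mul_left]
  refine tsum_congr fun k => ?_
  rw [jacobiTheta₂_term, ← Complex.exp_add]
  congr 1; ring

lemma aux_theta1_eq (u τ : ℂ) : theta1 u τ = - theta2 (u + 1/2) τ := rfl

lemma aux_theta4_eq (u τ : ℂ) : theta4 u τ = theta3 (u + 1/2) τ := rfl

lemma aux_exp_odd (k : ℤ) (a : ℂ) :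
    Complex.exp (a + 2 * (Real.pi : ℂ) * I * ((k : ℂ) + 1/2)) = - Complex.exp a := by
  have : a + 2 * (Real.pi : ℂ) * I * ((k : ℂ) + 1/2) = (a + k * (2 * (Real.pi : ℂ) * I)) + (Real.pi : ℂ) * I := by ring
  rw [this, Complex.exp_add_pi_mul_I, Complex.exp_periodic.int_mul k]

lemma aux_theta2_add_one (u τ : ℂ) : theta2 (u + 1) τ = - theta2 u τ := by
  unfold theta2
  rw [← tsum_neg]
  refine tsum_congr fun k => ?_
  rw [← aux_exp_odd k]
  congr 1; ring

lemma aux_theta3_add_one (u τ : ℂ) : theta3 (u + 1) τ = theta3 u τ := by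
  unfold theta3
  refine tsum_congr fun k => ?_
  rw [Complex.exp_eq_exp_iff_exists_int]
  exact ⟨k, by ring⟩

lemma aux_theta2_neg (u τ : ℂ) : theta2 (-u) τ = theta2 u τ := by
  unfold theta2
  let e : ℤ ≃ ℤ := ⟨fun k => -1 - k, fun k => -1 - k, fun k => by ring, fun k => by ring⟩
  rw [← e.tsum_eq]
  refine tsum_congr fun k => ?_
  congr 1
  simp only [e, Equiv.coe_fn_mk]
  push_cast; ring

lemma aux_theta1_neg (u τ : ℂ) : theta1 (-u) τ = - theta1 u τ := by
  have h := aux_theta2_add_one (u - 1/2) τ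
  rw [aux_theta1_eq, aux_theta1_eq, ← aux_theta2_neg (-u + 1/2),
    show -(-u + 1/2) = u - 1/2 by ring, ← h, neg_neg]
  congr 1; ring

lemma aux_theta1_half (u τ : ℂ) : theta1 (u + 1/2) τ = theta2 u τ := by
  rw [aux_theta1_eq, show u + 1/2 + 1/2 = u + 1 by ring, aux_theta2_add_one, neg_neg]

lemma aux_theta1_add_one (u τ : ℂ) : theta1 (u + 1) τ = - theta1 u τ := by
  rw [aux_theta1_eq, aux_theta1_eq, ← aux_theta2_add_one (u + 1/2)]
  ring_nf

lemma aux_theta4_neg (u τ : ℂ) : theta4 (-u) τ = theta4 u τ := by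
  rw [aux_theta4_eq, aux_theta4_eq]
  unfold theta3
  rw [← (Equiv.neg ℤ).tsum_eq]
  refine tsum_congr fun k => ?_
  rw [Complex.exp_eq_exp_iff_exists_int]
  refine ⟨-k, ?_⟩
  simp only [Equiv.neg_apply]
  push_cast; ring

lemma aux_summable3 (u : ℂ) {τ : ℂ} (hτ : 0 < τ.im) : Summable fun k : ℤ =>
    Complex.exp ((Real.pi : ℂ) * I * τ * (k : ℂ)^2 + 2 * (Real.pi : ℂ) * I * u * (k : ℂ)) := by
  refine ((summable_jacobiTheta₂_term_iff u τ).2 hτ).congr fun k => ?_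
  rw [jacobiTheta₂_term]; congr 1; ring

lemma aux_summable2 (u : ℂ) {τ : ℂ} (hτ : 0 < τ.im) : Summable fun k : ℤ =>
    Complex.exp ((Real.pi : ℂ) * I * τ * ((k : ℂ) + 1/2)^2
      + 2 * (Real.pi : ℂ) * I * u * ((k : ℂ) + 1/2)) := by
  refine (((summable_jacobiTheta₂_term_iff (u + τ/2) τ).2 hτ).mul_left
    (Complex.exp ((Real.pi : ℂ) * I * τ / 4 + (Real.pi : ℂ) * I * u))).congr fun k => ?_
  rw [jacobiTheta₂_term, ← Complex.exp_add]; congr 1; ring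

/-- Splitting of pairs of integers according to the parity of their difference. -/
noncomputable def auxEquiv : (ℤ × ℤ) ⊕ (ℤ × ℤ) ≃ ℤ × ℤ :=
  Equiv.ofBijective
    (Sum.elim (fun p => (p.1 + p.2, p.1 - p.2 - 1)) (fun p => (p.1 + p.2, p.1 - p.2))) (by
    constructor
    · rintro (⟨a, b⟩ | ⟨a, b⟩) (⟨c, d⟩ | ⟨c, d⟩) h <;>
        simp only [Sum.elim_inl, Sum.elim_inr, Prod.mk.injEq] at h
      · have : a = c ∧ b = d := by omega
        rw [this.1, this.2]
      · omega
      · omega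
      · have : a = c ∧ b = d := by omega
        rw [this.1, this.2]
    · rintro ⟨k, l⟩
      rcases Int.even_or_odd' (k - l) with ⟨i, hi | hi⟩
      · exact ⟨Sum.inr (k - i, i), by simp only [Sum.elim_inr, Prod.mk.injEq]; omega⟩
      · exact ⟨Sum.inl (k - i, i), by simp only [Sum.elim_inl, Prod.mk.injEq]; omega⟩)

lemma auxEquiv_inl (p : ℤ × ℤ) : auxEquiv (Sum.inl p) = (p.1 + p.2, p.1 - p.2 - 1) := rfl

lemma auxEquiv_inr (p : ℤ × ℤ) : auxEquiv (Sum.inr p) = (p.1 + p.2, p.1 - p.2) := rfl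

lemma aux_product (X Y : ℂ) {τ : ℂ} (hτ : 0 < τ.im) :
    theta2 X (τ/2) * theta2 Y (τ/2)
      = theta3 (X + Y) τ * theta2 (X - Y) τ + theta2 (X + Y) τ * theta3 (X - Y) τ := by
  have hσ : 0 < (τ/2).im := by
    rw [show τ/2 = ((1/2 : ℝ) : ℂ) * τ by push_cast; ring, Complex.im_ofReal_mul]
    positivity
  have s1 := (aux_summable2 X hσ).norm
  have s2 := (aux_summable2 Y hσ).norm
  have s3 := (aux_summable3 (X + Y) hτ).norm
  have s4 := (aux_summable2 (X - Y) hτ).norm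
  have s5 := (aux_summable2 (X + Y) hτ).norm
  have s6 := (aux_summable3 (X - Y) hτ).norm
  unfold theta2 theta3
  rw [tsum_mul_tsum_of_summable_norm s1 s2, tsum_mul_tsum_of_summable_norm s3 s4,
    tsum_mul_tsum_of_summable_norm s5 s6]
  have a1 := (summable_mul_of_summable_norm s1 s2)
  rw [← auxEquiv.tsum_eq]
  rw [← auxEquiv.summable_iff] at a1
  have a2 := a1.comp_injective Sum.inl_injective
  have a3 := a1.comp_injective Sum.inr_injective
  have key := (HasSum.sum a2.hasSum a3.hasSum).tsum_eq
  refine Eq.trans key ?_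
  congr 1
  · refine tsum_congr fun p => ?_
    simp only [Function.comp_apply, auxEquiv_inl]
    rw [← Complex.exp_add, ← Complex.exp_add]
    congr 1; push_cast; ring
  · refine tsum_congr fun p => ?_
    simp only [Function.comp_apply, auxEquiv_inr]
    rw [← Complex.exp_add, ← Complex.exp_add]
    congr 1; push_cast; ring

lemma aux_theta2_diff {τ : ℂ} (hτ : 0 < τ.im) : Differentiable ℂ (fun u => theta2 u τ) := by
  have : (fun u => theta2 u τ) = fun u => Complex.exp ((Real.pi : ℂ) * I * τ / 4 + (Real.pi : ℂ) * I * u) * jacobiTheta₂ (u + τ / 2) τ := by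
    funext u; exact aux_theta2_eq u τ
  rw [this]
  intro u
  have h := (differentiableAt_jacobiTheta₂_fst (u + τ/2) hτ).comp u (f := fun u => u + τ/2) (by fun_prop)
  exact DifferentiableAt.mul (by fun_prop) h

lemma aux_theta1_diff {τ : ℂ} (hτ : 0 < τ.im) : Differentiable ℂ (fun u => theta1 u τ) := by
  have := ((aux_theta2_diff hτ).comp (f := fun u : ℂ => u + 1/2) (by fun_prop)).neg
  exact this

lemma aux_theta4_diff {τ : ℂ} (hτ : 0 < τ.im) : Differentiable ℂ (fun u => theta4 u τ) := by
  have : (fun u => theta4 u τ) = fun u => jacobiTheta₂ (u + 1/2) τ := by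
    funext u
    unfold theta4 jacobiTheta₂
    refine tsum_congr fun k => ?_
    rw [jacobiTheta₂_term]; congr 1; ring
  rw [this]
  intro u
  exact (differentiableAt_jacobiTheta₂_fst (u + 1/2) hτ).comp u (f := fun u => u + 1/2) (by fun_prop)

lemma aux_H (X Y : ℂ) {τ : ℂ} (hτ : 0 < τ.im) :
    theta1 X (τ/2) * theta2 Y (τ/2)
      = theta4 (X + Y) τ * theta1 (X - Y) τ + theta1 (X + Y) τ * theta4 (X - Y) τ := by
  have := aux_product (X + 1/2) Y hτ
  simp only [aux_theta1_eq, aux_theta4_eq]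
  rw [show X + 1/2 + Y = X + Y + 1/2 by ring, show X + 1/2 - Y = X - Y + 1/2 by ring] at this
  linear_combination -this

lemma aux_P (X Y : ℂ) {τ : ℂ} (hτ : 0 < τ.im) :
    theta1 X (τ/2) * theta1 Y (τ/2)
      = theta3 (X + Y) τ * theta2 (X - Y) τ - theta2 (X + Y) τ * theta3 (X - Y) τ := by
  have := aux_product (X + 1/2) (Y + 1/2) hτ
  simp only [aux_theta1_eq]
  rw [show X + 1/2 + (Y + 1/2) = X + Y + 1 by ring, show X + 1/2 - (Y + 1/2) = X - Y by ring,
    aux_theta2_add_one, aux_theta3_add_one] at this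
  linear_combination this

lemma aux_W (x y z w : ℂ) {τ : ℂ} (hτ : 0 < τ.im) :
    theta1 (x+y) (τ/2) * theta1 (x-y) (τ/2) * (theta1 (z+w) (τ/2) * theta1 (z-w) (τ/2))
    + theta1 (x+z) (τ/2) * theta1 (x-z) (τ/2) * (theta1 (w+y) (τ/2) * theta1 (w-y) (τ/2))
    + theta1 (x+w) (τ/2) * theta1 (x-w) (τ/2) * (theta1 (y+z) (τ/2) * theta1 (y-z) (τ/2)) = 0 := by
  have P : ∀ a b : ℂ, theta1 (a+b) (τ/2) * theta1 (a-b) (τ/2) =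
      theta3 (2*a) τ * theta2 (2*b) τ - theta2 (2*a) τ * theta3 (2*b) τ := by
    intro a b
    rw [aux_P _ _ hτ, show a + b + (a - b) = 2 * a by ring, show a + b - (a - b) = 2 * b by ring]
  simp only [P]
  ring

/-! ## Consequences of the three-term relation -/

section Abstract

variable {f f1 f2 f3 : ℂ → ℂ}

lemma aux_even_deriv (hodd : ∀ u, f (-u) = - f u) (d0 : ∀ u, HasDerivAt f (f1 u) u) (u : ℂ) :
    f1 (-u) = f1 u := by
  have h1 : HasDerivAt (fun v => f (-v)) (-(f1 (-u))) u := by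
    have := (d0 (0 - u)).comp_const_sub 0 u
    simpa using this
  have h2 : HasDerivAt (fun v => f (-v)) (-(f1 u)) u := by
    have := (d0 u).neg
    have e : (fun v => f (-v)) = -f := by funext v; simp [hodd]
    rw [e]; exact this
  have := h1.unique h2
  linear_combination -this

lemma aux_odd_deriv (heven : ∀ u, f (-u) = f u) (d0 : ∀ u, HasDerivAt f (f1 u) u) (u : ℂ) :
    f1 (-u) = - f1 u := by
  have h1 : HasDerivAt (fun v => f (-v)) (-(f1 (-u))) u := by
    have := (d0 (0 - u)).comp_const_sub 0 u
    simpa using this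
  have h2 : HasDerivAt (fun v => f (-v)) (f1 u) u := by
    have e : (fun v => f (-v)) = f := by funext v; simp [heven]
    rw [e]; exact d0 u
  have := h1.unique h2
  linear_combination -this

/-- The three-term relation. -/
def AuxThreeTerm (f : ℂ → ℂ) : Prop := ∀ x y z w : ℂ,
    f (x+y) * f (x-y) * (f (z+w) * f (z-w))
    + f (x+z) * f (x-z) * (f (w+y) * f (w-y))
    + f (x+w) * f (x-w) * (f (y+z) * f (y-z)) = 0

lemma aux_W' (hodd : ∀ u, f (-u) = - f u) (hW : AuxThreeTerm f) (a b d e : ℂ) :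
    f e * f (a + b - e) * (f (a - d) * f (d - b))
      = f a * f b * (f (d - e) * f (a + b - d - e)) - f (a + b - d) * f d * (f (b - e) * f (a - e)) := by
  have h := hW ((a+b)/2) (-(a+b)/2 + e) ((a-b)/2) ((a+b)/2 - d)
  rw [show (a+b)/2 + (-(a+b)/2 + e) = e by ring,
    show (a+b)/2 - (-(a+b)/2 + e) = a + b - e by ring,
    show (a-b)/2 + ((a+b)/2 - d) = a - d by ring,
    show (a-b)/2 - ((a+b)/2 - d) = d - b by ring,
    show (a+b)/2 + (a-b)/2 = a by ring,
    show (a+b)/2 - (a-b)/2 = b by ring,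
    show (a+b)/2 - d + (-(a+b)/2 + e) = -(d - e) by ring,
    show (a+b)/2 - d - (-(a+b)/2 + e) = a + b - d - e by ring,
    show (a+b)/2 + ((a+b)/2 - d) = a + b - d by ring,
    show (a+b)/2 - ((a+b)/2 - d) = d by ring,
    show -(a+b)/2 + e + (a-b)/2 = -(b - e) by ring,
    show -(a+b)/2 + e - (a-b)/2 = -(a - e) by ring] at h
  simp only [hodd] at h
  linear_combination h

lemma aux_zero (hodd : ∀ u, f (-u) = - f u) : f 0 = 0 := by
  have := hodd 0
  rw [neg_zero] at this
  linear_combination this / 2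

lemma aux_M (hodd : ∀ u, f (-u) = - f u) (hW : AuxThreeTerm f) (d0 : ∀ u, HasDerivAt f (f1 u) u)
    (a b d : ℂ) :
    f1 0 * f (a + b) * (f (a - d) * f (d - b))
      = f (a + b - d) * f d * (f1 b * f a + f b * f1 a)
        - f a * f b * (f1 d * f (a + b - d) + f d * f1 (a + b - d)) := by
  have c : ∀ s : ℂ, HasDerivAt (fun e => f (s - e)) (-(f1 s)) 0 := by
    intro s
    have := (d0 (s - 0)).comp_const_sub s 0
    simpa using this
  have l := ((d0 0).mul (c (a + b))).mul_const (f (a - d) * f (d - b))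
  have r := (((c d).mul (c (a + b - d))).const_mul (f a * f b)).sub
    (((c b).mul (c a)).const_mul (f (a + b - d) * f d))
  have e := l.unique (r.congr_of_eventuallyEq (Filter.Eventually.of_forall fun e => by
    simpa using aux_W' hodd hW a b d e))
  simp only [sub_zero, aux_zero hodd] at e
  linear_combination e

lemma aux_III (hodd : ∀ u, f (-u) = - f u) (hW : AuxThreeTerm f) (d0 : ∀ u, HasDerivAt f (f1 u) u)
    (d1 : ∀ u, HasDerivAt f1 (f2 u) u) (d2 : ∀ u, HasDerivAt f2 (f3 u) u) (a b : ℂ) :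
    f1 0 * f (a + b) * (f2 a * f b + 2 * f1 a * f1 b + f a * f2 b)
      = 2 * f1 0 * f1 (a + b) * (f1 b * f a + f b * f1 a)
        + f a * f b * (f3 0 * f (a + b) - f1 0 * f2 (a + b)) := by
  have c0 : ∀ s t : ℂ, HasDerivAt (fun e => f (s - e)) (-(f1 (s - t))) t :=
    fun s t => (d0 (s - t)).comp_const_sub s t
  have c1 : ∀ s t : ℂ, HasDerivAt (fun e => f1 (s - e)) (-(f2 (s - t))) t :=
    fun s t => (d1 (s - t)).comp_const_sub s t
  have c2 : ∀ s t : ℂ, HasDerivAt (fun e => f2 (s - e)) (-(f3 (s - t))) t :=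
    fun s t => (d2 (s - t)).comp_const_sub s t
  have f20 : f2 0 = 0 := aux_zero (aux_odd_deriv (aux_even_deriv hodd d0) d1)
  have f00 : f 0 = 0 := aux_zero hodd
  -- first derivative
  have M1 : ∀ t, -(f1 0 * f (a + b)) * (-(f1 (a - t)) * f (b - t) + f (a - t) * -(f1 (b - t)))
      = (-(f1 (a + b - t)) * f t + f (a + b - t) * f1 t) * (f1 b * f a + f b * f1 a)
        - f a * f b * ((f2 t * f (a + b - t) + f1 t * -(f1 (a + b - t)))
          + (f1 t * f1 (a + b - t) + f t * -(f2 (a + b - t)))) := by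
    intro t
    have l := ((c0 a t).mul (c0 b t)).const_mul (-(f1 0 * f (a + b)))
    have r := (((c0 (a + b) t).mul (d0 t)).mul_const (f1 b * f a + f b * f1 a)).sub
      ((((d1 t).mul (c0 (a + b) t)).add ((d0 t).mul (c1 (a + b) t))).const_mul (f a * f b))
    refine l.unique (r.congr_of_eventuallyEq (Filter.Eventually.of_forall fun e => ?_))
    have h := aux_M hodd hW d0 a b e
    have h' := hodd (b - e)
    rw [neg_sub] at h'
    rw [h'] at h
    simp only [Pi.mul_apply, Pi.add_apply, Pi.sub_apply]
    linear_combination h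
  have l := (((c1 a 0).neg.mul (c0 b 0)).add ((c0 a 0).mul (c1 b 0).neg)).const_mul
    (-(f1 0 * f (a + b)))
  have r := ((((c1 (a + b) 0).neg.mul (d0 0)).add ((c0 (a + b) 0).mul (d1 0))).mul_const
      (f1 b * f a + f b * f1 a)).sub
      (((((d2 0).mul (c0 (a + b) 0)).add ((d1 0).mul (c1 (a + b) 0).neg)).add
        (((d1 0).mul (c1 (a + b) 0)).add ((d0 0).mul (c2 (a + b) 0).neg))).const_mul (f a * f b))
  have e := l.unique (r.congr_of_eventuallyEq (Filter.Eventually.of_forall fun e => by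
    have h := M1 e
    simp only [Pi.mul_apply, Pi.add_apply, Pi.sub_apply, Pi.neg_apply]
    linear_combination h))
  simp only [sub_zero, f00, f20, Pi.neg_apply] at e
  linear_combination -e

lemma aux_half_sub (hper : ∀ u, f (u + 1) = - f u) (u : ℂ) : f (u - 1/2) = - f (u + 1/2) := by
  have := hper (u - 1/2)
  rw [show u - 1/2 + 1 = u + 1/2 by ring] at this
  rw [this, neg_neg]

lemma aux_half_sub' (hodd : ∀ u, f (-u) = - f u) (hper : ∀ u, f (u + 1) = - f u) (u : ℂ) :
    f (1/2 - u) = f (u + 1/2) := by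
  rw [← neg_sub, hodd, aux_half_sub hper, neg_neg]

/-- the derivative vanishes at `1/2` -/
lemma aux_f1_half (hodd : ∀ u, f (-u) = - f u) (hper : ∀ u, f (u + 1) = - f u)
    (d0 : ∀ u, HasDerivAt f (f1 u) u) : f1 (1/2) = 0 := by
  have h := aux_odd_deriv (f := fun u => f (u + 1/2)) (f1 := fun u => f1 (u + 1/2))
    (fun u => by
      show f (-u + 1/2) = f (u + 1/2)
      rw [← aux_half_sub' hodd hper u]; congr 1; ring)
    (fun u => (d0 (u + 1/2)).comp_add_const u (1/2)) 0
  simp only [neg_zero, zero_add] at h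
  linear_combination h / 2

/-- Theta form of relation (II). -/
lemma aux_II (hodd : ∀ u, f (-u) = - f u) (hper : ∀ u, f (u + 1) = - f u) (hW : AuxThreeTerm f)
    (d0 : ∀ u, HasDerivAt f (f1 u) u) (a b : ℂ) :
    f1 0 * f (a + b) * (f (a + 1/2) * f (b + 1/2))
      = f (1/2) * (f (a + b + 1/2) * (f1 b * f a + f b * f1 a)
        - f a * f b * f1 (a + b + 1/2)) := by
  have h := aux_M hodd hW d0 a b (-(1/2))
  have e1 := aux_even_deriv hodd d0 (1/2)
  rw [aux_f1_half hodd hper d0] at e1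
  rw [show a - -(1/2) = a + 1/2 by ring, show -(1/2) - b = -(b + 1/2) by ring,
    show a + b - -(1/2) = a + b + 1/2 by ring, e1, hodd, hodd (1/2)] at h
  linear_combination -h

/-- Theta form of `℘₁ = φ² + c`. -/
lemma aux_V (hodd : ∀ u, f (-u) = - f u) (hper : ∀ u, f (u + 1) = - f u) (hW : AuxThreeTerm f)
    (d0 : ∀ u, HasDerivAt f (f1 u) u) (d1 : ∀ u, HasDerivAt f1 (f2 u) u) (x : ℂ) :
    f (1/2) ^ 2 * (f x * f2 x - f1 x ^ 2)
      = f x ^ 2 * (f (1/2) * f2 (1/2)) - f1 0 ^ 2 * f (x + 1/2) ^ 2 := by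
  have key : ∀ y, f (1/2) ^ 2 * (f (x + y) * f (x - y))
      = f x ^ 2 * f (1/2 + y) ^ 2 - f (x + 1/2) ^ 2 * f y ^ 2 := by
    intro y
    have h := hW x y 0 (1/2)
    rw [aux_half_sub hper x, aux_half_sub' hodd hper y] at h
    simp only [zero_add, zero_sub, hodd, add_zero, sub_zero] at h
    rw [add_comm y] at h
    linear_combination -h
  have f00 : f 0 = 0 := aux_zero hodd
  have h12 := aux_f1_half hodd hper d0
  have s0 : ∀ t, HasDerivAt (fun e => f (x - e)) (-(f1 (x - t))) t :=
    fun t => (d0 (x - t)).comp_const_sub x t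
  have s1 : ∀ t, HasDerivAt (fun e => f1 (x - e)) (-(f2 (x - t))) t :=
    fun t => (d1 (x - t)).comp_const_sub x t
  have p0 : ∀ s t, HasDerivAt (fun e => f (s + e)) (f1 (s + t)) t :=
    fun s t => (d0 (s + t)).comp_const_add s t
  have p1 : ∀ s t, HasDerivAt (fun e => f1 (s + e)) (f2 (s + t)) t :=
    fun s t => (d1 (s + t)).comp_const_add s t
  have K1 : ∀ y, f (1/2) ^ 2 * (f1 (x + y) * f (x - y) + f (x + y) * -(f1 (x - y)))
      = f x ^ 2 * (f1 (1/2 + y) * f (1/2 + y) + f (1/2 + y) * f1 (1/2 + y))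
        - f (x + 1/2) ^ 2 * (f1 y * f y + f y * f1 y) := by
    intro t
    have l := ((p0 x t).mul (s0 t)).const_mul (f (1/2) ^ 2)
    have r := (((p0 (1/2) t).mul (p0 (1/2) t)).const_mul (f x ^ 2)).sub
      (((d0 t).mul (d0 t)).const_mul (f (x + 1/2) ^ 2))
    refine l.unique (r.congr_of_eventuallyEq (Filter.Eventually.of_forall fun e => ?_))
    have h := key e
    simp only [Pi.mul_apply, Pi.sub_apply]
    linear_combination h
  have l := (((p1 x 0).mul (s0 0)).add ((p0 x 0).mul (s1 0).neg)).const_mul (f (1/2) ^ 2)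
  have r := ((((p1 (1/2) 0).mul (p0 (1/2) 0)).add ((p0 (1/2) 0).mul (p1 (1/2) 0))).const_mul
      (f x ^ 2)).sub
      ((((d1 0).mul (d0 0)).add ((d0 0).mul (d1 0))).const_mul (f (x + 1/2) ^ 2))
  have e := l.unique (r.congr_of_eventuallyEq (Filter.Eventually.of_forall fun e => by
    have h := K1 e
    simp only [Pi.mul_apply, Pi.add_apply, Pi.sub_apply, Pi.neg_apply]
    linear_combination h))
  simp only [sub_zero, add_zero, f00, h12, Pi.neg_apply] at e
  linear_combination e / 2

end Abstract

/-! ## The elliptic functions built from `f` -/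

section Elliptic

variable {f f1 f2 f3 : ℂ → ℂ}

/-- `ζ₁` -/
noncomputable def auxZ (f f1 : ℂ → ℂ) (u : ℂ) : ℂ := f1 u / f u
/-- `℘₁` -/
noncomputable def auxP (f f1 f2 : ℂ → ℂ) (u : ℂ) : ℂ := -((f2 u * f u - f1 u * f1 u) / f u ^ 2)
/-- the function phi -/
noncomputable def auxF (f f1 : ℂ → ℂ) (u : ℂ) : ℂ := f1 0 / f (1/2) * (f (u + 1/2) / f u)
/-- the derivative of phi -/
noncomputable def auxF1 (f f1 : ℂ → ℂ) (u : ℂ) : ℂ :=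
  f1 0 / f (1/2) * ((f1 (u + 1/2) * f u - f (u + 1/2) * f1 u) / f u ^ 2)

lemma auxZ_neg (hodd : ∀ u, f (-u) = - f u) (d0 : ∀ u, HasDerivAt f (f1 u) u) (u : ℂ) :
    auxZ f f1 (-u) = - auxZ f f1 u := by
  unfold auxZ
  rw [hodd, aux_even_deriv hodd d0, div_neg]

lemma aux_even_half (hodd : ∀ u, f (-u) = - f u) (hper : ∀ u, f (u + 1) = - f u) (u : ℂ) :
    f (-u + 1/2) = f (u + 1/2) := by
  rw [← aux_half_sub' hodd hper u]; congr 1; ring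

lemma auxF_neg (hodd : ∀ u, f (-u) = - f u) (hper : ∀ u, f (u + 1) = - f u) (u : ℂ) :
    auxF f f1 (-u) = - auxF f f1 u := by
  unfold auxF
  rw [hodd, aux_even_half hodd hper, div_neg, mul_neg]

lemma auxF1_neg (hodd : ∀ u, f (-u) = - f u) (hper : ∀ u, f (u + 1) = - f u)
    (d0 : ∀ u, HasDerivAt f (f1 u) u) (u : ℂ) :
    auxF1 f f1 (-u) = auxF1 f f1 u := by
  have h := aux_odd_deriv (f := fun u => f (u + 1/2)) (f1 := fun u => f1 (u + 1/2))
    (aux_even_half hodd hper)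
    (fun u => (d0 (u + 1/2)).comp_add_const u (1/2)) u
  unfold auxF1
  rw [hodd, aux_even_half hodd hper, h, aux_even_deriv hodd d0]
  ring

lemma auxP_eq (hodd : ∀ u, f (-u) = - f u) (hper : ∀ u, f (u + 1) = - f u) (hW : AuxThreeTerm f)
    (d0 : ∀ u, HasDerivAt f (f1 u) u) (d1 : ∀ u, HasDerivAt f1 (f2 u) u) (hg : f (1/2) ≠ 0)
    (u : ℂ) (hu : f u ≠ 0) :
    auxP f f1 f2 u = auxF f f1 u ^ 2 + -(f2 (1/2) / f (1/2)) := by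
  have h := aux_V hodd hper hW d0 d1 u
  unfold auxP auxF
  generalize f (1/2) = g0 at *
  generalize f (u + 1/2) = gu at *
  field_simp
  linear_combination -h

lemma auxII (hodd : ∀ u, f (-u) = - f u) (hper : ∀ u, f (u + 1) = - f u) (hW : AuxThreeTerm f)
    (d0 : ∀ u, HasDerivAt f (f1 u) u) (hg : f (1/2) ≠ 0)
    (a b : ℂ) (ha : f a ≠ 0) (hb : f b ≠ 0) (hs : f (a + b) ≠ 0) :
    auxF1 f f1 (a + b) = auxF f f1 (a + b) * (auxZ f f1 a + auxZ f f1 b - auxZ f f1 (a + b))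
      - auxF f f1 a * auxF f f1 b := by
  have h := aux_II hodd hper hW d0 a b
  unfold auxF1 auxF auxZ
  generalize f (1/2) = g0 at *
  generalize f (a + b + 1/2) = gs at *
  generalize f (a + 1/2) = ga at *
  generalize f (b + 1/2) = gb at *
  generalize f1 (a + b + 1/2) = g1s at *
  field_simp
  linear_combination f1 0 * f (a + b) * h

lemma auxII' (hodd : ∀ u, f (-u) = - f u) (hper : ∀ u, f (u + 1) = - f u) (hW : AuxThreeTerm f)
    (d0 : ∀ u, HasDerivAt f (f1 u) u) (hg : f (1/2) ≠ 0)
    (a b : ℂ) (ha : f a ≠ 0) (hb : f b ≠ 0) (hs : f (a + b) ≠ 0) :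
    auxF1 f f1 a = - auxF f f1 a * (auxZ f f1 a + auxZ f f1 b - auxZ f f1 (a + b))
      + auxF f f1 (a + b) * auxF f f1 b := by
  have h := auxII hodd hper hW d0 hg (a + b) (-b) hs (by rw [hodd]; exact neg_ne_zero.2 hb)
    (by rwa [add_neg_cancel_right])
  rw [add_neg_cancel_right, auxZ_neg hodd d0, auxF_neg hodd hper] at h
  linear_combination h

lemma auxIII (hodd : ∀ u, f (-u) = - f u) (hper : ∀ u, f (u + 1) = - f u) (hW : AuxThreeTerm f)
    (d0 : ∀ u, HasDerivAt f (f1 u) u) (d1 : ∀ u, HasDerivAt f1 (f2 u) u)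
    (d2 : ∀ u, HasDerivAt f2 (f3 u) u) (hg : f (1/2) ≠ 0) (hk : f1 0 ≠ 0)
    (a b : ℂ) (ha : f a ≠ 0) (hb : f b ≠ 0) (hs : f (a + b) ≠ 0) :
    (auxZ f f1 a + auxZ f f1 b - auxZ f f1 (a + b)) ^ 2
      = auxF f f1 a ^ 2 + auxF f f1 b ^ 2 + auxF f f1 (a + b) ^ 2
        + (3 * -(f2 (1/2) / f (1/2)) + f3 0 / f1 0) := by
  have h := aux_III hodd hW d0 d1 d2 a b
  have e1 := auxP_eq hodd hper hW d0 d1 hg a ha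
  have e2 := auxP_eq hodd hper hW d0 d1 hg b hb
  have e3 := auxP_eq hodd hper hW d0 d1 hg (a + b) hs
  have key : (auxZ f f1 a + auxZ f f1 b - auxZ f f1 (a + b)) ^ 2
      = auxP f f1 f2 a + auxP f f1 f2 b + auxP f f1 f2 (a + b) + f3 0 / f1 0 := by
    unfold auxP auxZ
    field_simp
    linear_combination f a * f b * f (a + b) * h
  rw [key, e1, e2, e3]
  ring

lemma auxZ_deriv (d0 : ∀ u, HasDerivAt f (f1 u) u) (d1 : ∀ u, HasDerivAt f1 (f2 u) u)
    (u : ℂ) (hu : f u ≠ 0) : HasDerivAt (auxZ f f1) (-(auxP f f1 f2 u)) u := by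
  have := (d1 u).div (d0 u) hu
  unfold auxP
  rw [neg_neg]
  exact this

lemma auxF_deriv (d0 : ∀ u, HasDerivAt f (f1 u) u)
    (u : ℂ) (hu : f u ≠ 0) : HasDerivAt (auxF f f1) (auxF1 f f1 u) u :=
  (((d0 (u + 1/2)).comp_add_const u (1/2)).div (d0 u) hu).const_mul (f1 0 / f (1/2))

lemma auxF1_eq (u : ℂ) (hu : f u ≠ 0) (hgu : f (u + 1/2) ≠ 0) :
    auxF1 f f1 u = auxF f f1 u * (auxZ f f1 (u + 1/2) - auxZ f f1 u) := by
  unfold auxF1 auxF auxZ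
  generalize f (u + 1/2) = gu at *
  generalize f (1/2) = g0 at *
  field_simp

lemma auxF_half (hper : ∀ u, f (u + 1) = - f u) (u : ℂ) (hu : f u ≠ 0)
    (hgu : f (u + 1/2) ≠ 0) :
    auxF f f1 u * auxF f f1 (u + 1/2) = -(f1 0 / f (1/2)) ^ 2 := by
  unfold auxF
  rw [show u + 1/2 + 1/2 = u + 1 by ring, hper]
  generalize f (u + 1/2) = gu at *
  generalize f1 0 / f (1/2) = c at *
  field_simp

lemma auxF_curve (hodd : ∀ u, f (-u) = - f u) (hper : ∀ u, f (u + 1) = - f u) (hW : AuxThreeTerm f)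
    (d0 : ∀ u, HasDerivAt f (f1 u) u) (d1 : ∀ u, HasDerivAt f1 (f2 u) u)
    (d2 : ∀ u, HasDerivAt f2 (f3 u) u) (hg : f (1/2) ≠ 0) (hk : f1 0 ≠ 0)
    (u : ℂ) (hu : f u ≠ 0) (hgu : f (u + 1/2) ≠ 0) :
    auxF1 f f1 u ^ 2 = auxF f f1 u ^ 4
        + (3 * -(f2 (1/2) / f (1/2)) + f3 0 / f1 0) * auxF f f1 u ^ 2 + (f1 0 / f (1/2)) ^ 4 := by
  have h := auxIII hodd hper hW d0 d1 d2 hg hk u (1/2) hu hg hgu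
  have h2 := auxF_half (f1 := f1) hper u hu hgu
  have h3 := auxF1_eq (f1 := f1) u hu hgu
  have h4 : auxZ f f1 (1/2) = 0 := by
    unfold auxZ; rw [aux_f1_half hodd hper d0, zero_div]
  have h5 : auxF f f1 (1/2) = 0 := by
    unfold auxF
    rw [show (1/2 : ℂ) + 1/2 = 0 + 1 by norm_num, hper, aux_zero hodd]; simp
  rw [h4, h5] at h
  rw [h3]
  generalize (3 * -(f2 (1/2) / f (1/2)) + f3 0 / f1 0) = p at *
  generalize f1 0 / f (1/2) = c at *
  linear_combination auxF f f1 u ^ 2 * h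
    + (auxF f f1 u * auxF f f1 (u + 1/2) - c ^ 2) * h2

lemma auxF1_deriv (hodd : ∀ u, f (-u) = - f u) (hper : ∀ u, f (u + 1) = - f u) (hW : AuxThreeTerm f)
    (d0 : ∀ u, HasDerivAt f (f1 u) u) (d1 : ∀ u, HasDerivAt f1 (f2 u) u)
    (d2 : ∀ u, HasDerivAt f2 (f3 u) u) (hg : f (1/2) ≠ 0) (hk : f1 0 ≠ 0)
    (u : ℂ) (hu : f u ≠ 0) (hgu : f (u + 1/2) ≠ 0) :
    HasDerivAt (auxF1 f f1) (2 * auxF f f1 u ^ 3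
        + (3 * -(f2 (1/2) / f (1/2)) + f3 0 / f1 0) * auxF f f1 u) u := by
  have cf : Continuous f := continuous_iff_continuousAt.2 fun v => (d0 v).continuousAt
  have ev1 : ∀ᶠ v in nhds u, f v ≠ 0 := cf.continuousAt.eventually_ne hu
  have ev2 : ∀ᶠ v in nhds u, f (v + 1/2) ≠ 0 :=
    ContinuousAt.eventually_ne (g := fun v => f (v + 1/2)) (by fun_prop) hgu
  have ev : auxF1 f f1 =ᶠ[nhds u]
      auxF f f1 * ((fun v => auxZ f f1 (v + 1/2)) - auxZ f f1) := by
    filter_upwards [ev1, ev2] with v h1 h2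
    exact auxF1_eq v h1 h2
  have D := (auxF_deriv d0 u hu).mul
    (((auxZ_deriv d0 d1 (u + 1/2) hgu).comp_add_const u (1/2)).sub (auxZ_deriv d0 d1 u hu))
  have D' := D.congr_of_eventuallyEq ev
  refine D'.congr_deriv (Eq.symm ?_)
  have h2 := auxF_half (f1 := f1) hper u hu hgu
  have h3 := auxF1_eq (f1 := f1) u hu hgu
  have h6 := auxF_curve hodd hper hW d0 d1 d2 hg hk u hu hgu
  have e1 := auxP_eq hodd hper hW d0 d1 hg u hu
  have e2 := auxP_eq hodd hper hW d0 d1 hg (u + 1/2) hgu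
  rw [e1, e2]
  simp only [Pi.sub_apply]
  have hF : auxF f f1 u ≠ 0 := by
    unfold auxF
    exact mul_ne_zero (div_ne_zero hk hg) (div_ne_zero hgu hu)
  apply mul_left_cancel₀ hF
  generalize (3 * -(f2 (1/2) / f (1/2)) + f3 0 / f1 0) = p at *
  generalize -(f2 (1/2) / f (1/2)) = c0 at *
  generalize f1 0 / f (1/2) = c at *
  linear_combination -h6 + auxF1 f f1 u * h3 +
    (auxF f f1 u * auxF f f1 (u + 1/2) - c ^ 2) * h2

end Elliptic

lemma aux_final (A A1 C C1 D D1 X X1 Y Y1 Z T T2 T3 p q c0 : ℂ)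
    (hC : C ≠ 0) (hX : X ≠ 0) (hY : Y ≠ 0)
    (a1 : A1 = -A * T + D * C) (a2 : C1 = -C * T + D * A) (a3 : D1 = D * T - A * C)
    (a4 : T ^ 2 = A ^ 2 + C ^ 2 + D ^ 2 + p)
    (b1 : D1 = -D * T2 + Z * Y) (b2 : Y1 = -Y * T2 + Z * D)
    (b4 : T2 ^ 2 = D ^ 2 + Y ^ 2 + Z ^ 2 + p)
    (c1 : A1 = -A * T3 + Z * X) (c2 : X1 = -X * T3 + Z * A)
    (c4 : T3 ^ 2 = A ^ 2 + X ^ 2 + Z ^ 2 + p)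
    (hx : X1 ^ 2 = X ^ 4 + p * X ^ 2 + q) (hy : Y1 ^ 2 = Y ^ 4 + p * Y ^ 2 + q) :
    (2 * C ^ 3 + p * C) * (T + C1 / C) - 2 * C1 * (q / C ^ 2 + c0)
      - C * (-2 * q * C1 / C ^ 3) + 2 * C1 * (D ^ 2 + c0)
      + C1 * (Y1 / Y) * (T2 + Y1 / Y) - C1 * (X1 / X) * (T3 + X1 / X)
      + C1 * ((q / X ^ 2 + c0) - (q / Y ^ 2 + c0)) - (Z / X) * A1 * C1 + (Z / Y) * D1 * C1
      + A1 * D1 = 0 := by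
  have gy : (Y1 / Y) * (T2 + Y1 / Y) - q / Y ^ 2 + (Z / Y) * D1 = - D ^ 2 := by
    field_simp
    rw [b1]
    linear_combination hy + Y * T2 * b2 - Y ^ 2 * b4
  have gx : (X1 / X) * (T3 + X1 / X) - q / X ^ 2 + (Z / X) * A1 = - A ^ 2 := by
    field_simp
    rw [c1]
    linear_combination hx + X * T3 * c2 - X ^ 2 * c4
  have gc : (2 * C ^ 3 + p * C) * (T + C1 / C) - 2 * C1 * (q / C ^ 2 + c0)
      - C * (-2 * q * C1 / C ^ 3) = (2 * C ^ 3 + p * C) * T + C1 * (2 * C ^ 2 + p) - 2 * C1 * c0 := by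
    field_simp
    ring
  rw [gc]
  have : (2 * C ^ 3 + p * C) * T + C1 * (2 * C ^ 2 + p) + C1 * (D ^ 2 + A ^ 2) + A1 * D1 = 0 := by
    rw [a1, a2, a3]
    linear_combination -A * D * a4
  linear_combination this + C1 * gy - C1 * gx

/-! ## Connection with the frozen definitions -/

lemma aux_im {τ : ℂ} (hτ : 0 < τ.im) : 0 < (τ/2).im := by
  rw [show τ/2 = ((1/2 : ℝ) : ℂ) * τ by push_cast; ring, Complex.im_ofReal_mul]
  positivity

lemma aux_hasDeriv {F : ℂ → ℂ} (hF : Differentiable ℂ F) (u : ℂ) : HasDerivAt F (deriv F u) u :=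
  (hF u).hasDerivAt

lemma aux_diff_deriv {F : ℂ → ℂ} (hF : Differentiable ℂ F) : Differentiable ℂ (deriv F) :=
  fun u => (hF.analyticAt u).deriv.differentiableAt

lemma aux_fg (u : ℂ) {τ : ℂ} (hτ : 0 < τ.im) :
    theta1 u (τ/2) * theta2 0 (τ/2) = 2 * (theta1 u τ * theta4 u τ) := by
  have h := aux_H u 0 hτ
  rw [add_zero, sub_zero] at h
  linear_combination h

lemma aux_Sp {τ : ℂ} (hτ : 0 < τ.im) (hg : theta1 (1/2) (τ/2) ≠ 0) (u : ℂ)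
    (hu : theta1 u (τ/2) ≠ 0) :
    Sp u τ = auxF (fun v => theta1 v (τ/2)) (deriv fun v => theta1 v (τ/2)) u := by
  have g0 : theta2 0 (τ/2) = theta1 (1/2) (τ/2) := by
    rw [← aux_theta1_half, zero_add]
  have h1 := aux_fg u hτ
  rw [g0] at h1
  have hne : theta1 u τ * theta4 u τ ≠ 0 := by
    intro h0
    rw [h0, mul_zero] at h1
    exact mul_ne_zero hu hg h1
  have t1 := left_ne_zero_of_mul hne
  have t4 := right_ne_zero_of_mul hne
  have D1 := aux_hasDeriv (aux_theta1_diff hτ)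
  have D4 := aux_hasDeriv (aux_theta4_diff hτ)
  have Df := aux_hasDeriv (aux_theta1_diff (aux_im hτ))
  have l := (Df 0).mul_const (theta2 u (τ/2))
  have a1 := (D1 (0 + u)).comp_add_const 0 u
  have a4 := (D4 (0 + u)).comp_add_const 0 u
  have b1 := (D1 (0 - u)).comp_sub_const 0 u
  have b4 := (D4 (0 - u)).comp_sub_const 0 u
  have r := (a4.mul b1).add (a1.mul b4)
  have e := l.unique (r.congr_of_eventuallyEq (Filter.Eventually.of_forall fun X => by
    simpa using aux_H X u hτ))
  have ev := aux_even_deriv (f := fun v => theta1 v τ) (fun v => aux_theta1_neg v τ) D1 u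
  have od := aux_odd_deriv (f := fun v => theta4 v τ) (fun v => aux_theta4_neg v τ) D4 u
  simp only [zero_add, zero_sub, ev, od, aux_theta1_neg, aux_theta4_neg] at e
  unfold Sp zeta1 zeta4 auxF
  simp only [aux_theta1_half]
  rw [div_sub_div _ _ t1 t4, div_mul_div_comm, div_eq_div_iff hne (mul_ne_zero hg hu)]
  linear_combination (deriv (fun v => theta1 v τ) u * theta4 u τ -
    theta1 u τ * deriv (fun v => theta4 v τ) u) * h1 - theta1 u τ * theta4 u τ * e
/-- Vanishing of h (Appendix D): the identity proving
∂_{λ_k}Γ_{ij} = Γ_{ij}Γ_{jk} + Γ_{ik}Γ_{kj} − Γ_{ik}Γ_{ij}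
under the elliptic Gibbons–Tsarev system. Here σ = τ/2. -/
theorem appendixD_h_vanishes (τ x y z : ℂ) (hτ : 0 < τ.im)
    (h1 : theta1 (x - y) τ ≠ 0) (h2 : theta4 (x - y) τ ≠ 0)
    (h3 : theta1 x τ ≠ 0) (h4 : theta4 x τ ≠ 0)
    (h5 : theta1 y τ ≠ 0) (h6 : theta4 y τ ≠ 0)
    (h7 : theta1 z τ ≠ 0) (h8 : theta4 z τ ≠ 0)
    (h9 : theta1 (z - x) τ ≠ 0) (h10 : theta4 (z - x) τ ≠ 0)
    (h11 : theta1 (z - y) τ ≠ 0) (h12 : theta4 (z - y) τ ≠ 0)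
    (h13 : theta1 (z - x) (τ / 2) ≠ 0) (h14 : theta1 (z - y) (τ / 2) ≠ 0)
    (h15 : theta1 z (τ / 2) ≠ 0) (h16 : theta1 (y - z) (τ / 2) ≠ 0)
    (h17 : theta2 (x - y) (τ / 2) ≠ 0) (h18 : theta2 x (τ / 2) ≠ 0)
    (h19 : theta2 y (τ / 2) ≠ 0)
    (h20 : Sp x τ ≠ 0) (h21 : Sp y τ ≠ 0) :
    Sppp (x - y) τ
        * (zeta1 (z - x) (τ / 2) - zeta1 (z - y) (τ / 2) + zeta2 (x - y) (τ / 2))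
      - 2 * Spp (x - y) τ * wp2 (x - y) (τ / 2)
      - Sp (x - y) τ * wp2' (x - y) (τ / 2)
      + 2 * Spp (x - y) τ * wp1 (y - z) (τ / 2)
      + Spp (x - y) τ * (Spp y τ / Sp y τ)
          * (-zeta1 z (τ / 2) + zeta1 (z - y) (τ / 2) + zeta2 y (τ / 2))
      - Spp (x - y) τ * (Spp x τ / Sp x τ)
          * (-zeta1 z (τ / 2) + zeta1 (z - x) (τ / 2) + zeta2 x (τ / 2))
      + Spp (x - y) τ * (wp2 x (τ / 2) - wp2 y (τ / 2))
      - (Sp z τ / Sp x τ) * Spp (z - x) τ * Spp (x - y) τ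
      + (Sp z τ / Sp y τ) * Spp (z - y) τ * Spp (x - y) τ
      + Spp (z - x) τ * Spp (z - y) τ = 0 := by

  have hσ := aux_im hτ
  set f : ℂ → ℂ := fun v => theta1 v (τ/2) with hf
  have hodd : ∀ u, f (-u) = - f u := fun u => aux_theta1_neg u _
  have hper : ∀ u, f (u + 1) = - f u := fun u => aux_theta1_add_one u _
  have hW : AuxThreeTerm f := fun x y z w => aux_W x y z w hτ
  have hd : Differentiable ℂ f := aux_theta1_diff hσ
  have d0 := aux_hasDeriv hd
  have d1 := aux_hasDeriv (aux_diff_deriv hd)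
  have d2 := aux_hasDeriv (aux_diff_deriv (aux_diff_deriv hd))
  set f1 := deriv f with hf1
  set f2 := deriv f1 with hf2
  set f3 := deriv f2 with hf3
  have g0 : theta2 0 (τ/2) = f (1/2) := by
    rw [← aux_theta1_half, zero_add]
  have hg : f (1/2) ≠ 0 := by
    intro h0
    have h := aux_fg (x - y) hτ
    rw [g0, h0, mul_zero] at h
    exact mul_ne_zero two_ne_zero (mul_ne_zero h1 h2) h.symm
  have fne : ∀ u, theta1 u τ ≠ 0 → theta4 u τ ≠ 0 → f u ≠ 0 := by
    intro u ha hb h0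
    have h := aux_fg u hτ
    rw [show theta1 u (τ/2) = f u from rfl, h0, zero_mul] at h
    exact mul_ne_zero two_ne_zero (mul_ne_zero ha hb) h.symm
  have fc := fne _ h1 h2
  have fx := fne _ h3 h4
  have fy := fne _ h5 h6
  have fz := fne _ h7 h8
  have fa := fne _ h9 h10
  have fb := fne _ h11 h12
  have hSp : ∀ u, f u ≠ 0 → Sp u τ = auxF f f1 u := fun u hu => aux_Sp hτ hg u hu
  have hk : f1 0 ≠ 0 := by
    intro h0
    apply h20
    rw [hSp x fx, auxF, h0]; simp
  have cf : Continuous f := hd.continuous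
  have evf : ∀ u, f u ≠ 0 → ∀ᶠ v in nhds u, f v ≠ 0 := fun u hu => cf.continuousAt.eventually_ne hu
  have evg : ∀ u, f (u + 1/2) ≠ 0 → ∀ᶠ v in nhds u, f (v + 1/2) ≠ 0 := fun u hu =>
    ContinuousAt.eventually_ne (g := fun v => f (v + 1/2)) (by fun_prop) hu
  have hSpp : ∀ u, f u ≠ 0 → Spp u τ = auxF1 f f1 u := by
    intro u hu
    refine ((auxF_deriv d0 u hu).congr_of_eventuallyEq ?_).deriv
    filter_upwards [evf u hu] with v hv using hSp v hv
  set c0 := -(f2 (1/2) / f (1/2)) with hc0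
  set p := 3 * c0 + f3 0 / f1 0 with hp
  set c := f1 0 / f (1/2) with hc
  have hSppp : ∀ u, f u ≠ 0 → f (u + 1/2) ≠ 0 →
      Sppp u τ = 2 * auxF f f1 u ^ 3 + p * auxF f f1 u := by
    intro u hu hgu
    refine ((auxF1_deriv hodd hper hW d0 d1 d2 hg hk u hu hgu).congr_of_eventuallyEq ?_).deriv
    filter_upwards [evf u hu] with v hv using hSpp v hv
  have hz1 : ∀ u, zeta1 u (τ/2) = auxZ f f1 u := fun u => rfl
  have th2 : (fun v => theta2 v (τ/2)) = fun v => f (v + 1/2) := by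
    funext v; exact (aux_theta1_half v _).symm
  have hz2 : ∀ u, zeta2 u (τ/2) = auxZ f f1 (u + 1/2) := by
    intro u
    unfold zeta2 auxZ
    rw [th2, ((d0 (u + 1/2)).comp_add_const u (1/2)).deriv, ← aux_theta1_half]
  have hw1 : ∀ u, f u ≠ 0 → wp1 u (τ/2) = auxF f f1 u ^ 2 + c0 := by
    intro u hu
    rw [← auxP_eq hodd hper hW d0 d1 hg u hu]
    have := (auxZ_deriv d0 d1 u hu).deriv
    show -deriv (auxZ f f1) u = _
    rw [this, neg_neg]
  have hFne : ∀ u, f u ≠ 0 → f (u + 1/2) ≠ 0 → auxF f f1 u ≠ 0 := by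
    intro u hu hgu
    unfold auxF
    exact mul_ne_zero (div_ne_zero hk hg) (div_ne_zero hgu hu)
  have hw2 : ∀ u, f u ≠ 0 → f (u + 1/2) ≠ 0 →
      wp2 u (τ/2) = c ^ 4 / auxF f f1 u ^ 2 + c0 := by
    intro u hu hgu
    have e : (fun v => zeta2 v (τ/2)) = fun v => auxZ f f1 (v + 1/2) := funext hz2
    unfold wp2
    rw [e, ((auxZ_deriv d0 d1 (u + 1/2) hgu).comp_add_const u (1/2)).deriv, neg_neg,
      auxP_eq hodd hper hW d0 d1 hg _ hgu]
    have h := auxF_half (f1 := f1) hper u hu hgu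
    have hne := hFne u hu hgu
    rw [← hc] at h
    rw [← hc0]
    congr 1
    rw [eq_div_iff (pow_ne_zero 2 hne)]
    linear_combination (auxF f f1 u * auxF f f1 (u + 1/2) - c ^ 2) * h
  have hw2' : ∀ u, f u ≠ 0 → f (u + 1/2) ≠ 0 →
      wp2' u (τ/2) = -2 * c ^ 4 * auxF1 f f1 u / auxF f f1 u ^ 3 := by
    intro u hu hgu
    have hne := hFne u hu hgu
    have D := (((hasDerivAt_const u (c ^ 4)).div ((auxF_deriv d0 u hu).pow 2)
      (pow_ne_zero 2 hne)).add_const c0)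
    have D' := D.congr_of_eventuallyEq (f₁ := fun v => wp2 v (τ/2)) (by
      filter_upwards [evf u hu, evg u hgu] with v h1 h2 using hw2 v h1 h2)
    unfold wp2'
    rw [D'.deriv]
    simp only [Pi.pow_apply]
    field_simp
    ring
  have gc : f (x - y + 1/2) ≠ 0 := by
    rw [show f (x - y + 1/2) = theta2 (x - y) (τ/2) from aux_theta1_half _ _]; exact h17
  have gx : f (x + 1/2) ≠ 0 := by
    rw [show f (x + 1/2) = theta2 x (τ/2) from aux_theta1_half _ _]; exact h18
  have gy : f (y + 1/2) ≠ 0 := by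
    rw [show f (y + 1/2) = theta2 y (τ/2) from aux_theta1_half _ _]; exact h19
  have hzz : ∀ u, f u ≠ 0 → f (u + 1/2) ≠ 0 →
      auxZ f f1 (u + 1/2) = auxZ f f1 u + auxF1 f f1 u / auxF f f1 u := by
    intro u hu hgu
    rw [auxF1_eq u hu hgu, mul_div_cancel_left₀ _ (hFne u hu hgu)]
    ring
  have fyz : f (y - z) ≠ 0 := h16
  have Fyz : auxF f f1 (y - z) = - auxF f f1 (z - y) := by
    rw [← auxF_neg hodd hper, neg_sub]
  -- the three triples
  have s1 : z - x + (x - y) = z - y := by ring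
  have s1' : x - y + (z - x) = z - y := by ring
  have s2 : z - y + y = z := by ring
  have s2' : y + (z - y) = z := by ring
  have s3 : z - x + x = z := by ring
  have s3' : x + (z - x) = z := by ring
  have II := auxII hodd hper hW d0 hg
  have II' := auxII' hodd hper hW d0 hg
  have III := auxIII hodd hper hW d0 d1 d2 hg hk
  have a1 := II' (z - x) (x - y) fa fc (by rwa [s1])
  have a2 := II' (x - y) (z - x) fc fa (by rwa [s1'])
  have a3 := II (z - x) (x - y) fa fc (by rwa [s1])
  have a4 := III (z - x) (x - y) fa fc (by rwa [s1])
  have b1 := II' (z - y) y fb fy (by rwa [s2])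
  have b2 := II' y (z - y) fy fb (by rwa [s2'])
  have b4 := III (z - y) y fb fy (by rwa [s2])
  have c1 := II' (z - x) x fa fx (by rwa [s3])
  have c2 := II' x (z - x) fx fa (by rwa [s3'])
  have c4 := III (z - x) x fa fx (by rwa [s3])
  rw [s1] at a1 a3 a4
  rw [s1'] at a2
  rw [s2] at b1 b4
  rw [s2'] at b2
  rw [s3] at c1 c4
  rw [s3'] at c2
  have hx := auxF_curve hodd hper hW d0 d1 d2 hg hk x fx gx
  have hy := auxF_curve hodd hper hW d0 d1 d2 hg hk y fy gy
  rw [hSppp _ fc gc, hSpp _ fc, hSp _ fc, hw2 _ fc gc, hw2' _ fc gc, hw1 _ fyz, hw2 _ fx gx,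
    hw2 _ fy gy, hSpp _ fx, hSpp _ fy, hSp _ fx, hSp _ fy, hSp _ fz, hSpp _ fa, hSpp _ fb,
    hz1, hz1, hz1, hz2, hz2, hz2, hzz _ fc gc, hzz _ fx gx, hzz _ fy gy, Fyz]
  have fin := aux_final (auxF f f1 (z - x)) (auxF1 f f1 (z - x)) (auxF f f1 (x - y))
    (auxF1 f f1 (x - y)) (auxF f f1 (z - y)) (auxF1 f f1 (z - y)) (auxF f f1 x) (auxF1 f f1 x)
    (auxF f f1 y) (auxF1 f f1 y) (auxF f f1 z)
    (auxZ f f1 (z - x) + auxZ f f1 (x - y) - auxZ f f1 (z - y))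
    (auxZ f f1 (z - y) + auxZ f f1 y - auxZ f f1 z)
    (auxZ f f1 (z - x) + auxZ f f1 x - auxZ f f1 z) p (c ^ 4) c0
    (hFne _ fc gc) (hFne _ fx gx) (hFne _ fy gy)
    a1 (by linear_combination a2) a3 a4 b1 (by linear_combination b2)
    b4 c1 (by linear_combination c2) c4 hx hy
  linear_combination fin
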